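/- Let n ≥ 3 be an integer and T > 0 a real number. The equation u'' - ((n-2)²/4) u + (n(n-2)/4) u^((n+2)/(n-2)) = 0 admits a nonconstant positive periodic solution u : ℝ → ℝ with minimal period T if and only if T > 2π/√(n-2). -/

import Mathlib

open Real

/-!
For `A, B > 0` and `p > 1` consider the equation `u'' = A u - B u ^ p`.

A positive `T`-periodic solution satisfies
`(u' u'' - (p / 3) u' ^ 3 / u)' = u'' ^ 2 - (p - 1) A u' ^ 2 + (p / 3) u' ^ 4 / u ^ 2`.
Over one period the left side integrates to zero and Wirtinger's inequality gives
`∫ u'' ^ 2 ≥ (2π / T) ^ 2 ∫ u' ^ 2`, so `(2π / T) ^ 2 < (p - 1) A` unless `u` is constant.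

Conversely, `u'' = -V' u` for a potential `V` with a nondegenerate minimum at the constant solution
`c`. With `r ^ 2 = 2 (V u - V c)`, `r` having the sign of `u - c`, the energy becomes
`(u' ^ 2 + r ^ 2) / 2`, so the orbits are `r = a sin φ`, `u' = a cos φ`, of period
`∫ (du/dr)(a sin φ) dφ` over `[0, 2π]`. This period is continuous in the amplitude `a`, equals
`2π / √((p - 1) A)` at `a = 0`, and is unbounded: on the orbit with minimum `ε` one has
`u' ^ 2 ≤ A u ^ 2`, so climbing from `ε` to `c` takes time at least `log (c / ε) / √A`.
-/

open Set Filter Topology intervalIntegral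

/-- `T` is a period of `f` and no smaller positive number is; unlike in the usual notion of minimal
period, `0 < T` is not part of the definition. -/
def HasMinimalPeriod (f : ℝ → ℝ) (T : ℝ) : Prop :=
  Function.Periodic f T ∧ ∀ T', 0 < T' → T' < T → ¬ Function.Periodic f T'

lemma HasMinimalPeriod.comp_injOn {f g : ℝ → ℝ} {s : Set ℝ} {T : ℝ} (hf : HasMinimalPeriod f T)
    (hfs : ∀ t, f t ∈ s) (hg : InjOn g s) : HasMinimalPeriod (fun t => g (f t)) T :=
  ⟨fun t => congrArg g (hf.1 t),
    fun T' hT' hlt hper => hf.2 T' hT' hlt fun t => hg (hfs _) (hfs _) (hper t)⟩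

lemma HasMinimalPeriod.not_exists_eq_const {f : ℝ → ℝ} {T : ℝ} (hf : HasMinimalPeriod f T)
    (hT : 0 < T) : ¬ ∃ a, ∀ t, f t = a := fun ⟨_, ha⟩ =>
  hf.2 (T / 2) (by linarith) (by linarith) fun t => by rw [ha, ha]

section Wirtinger

open MeasureTheory

variable {T : ℝ} {f f' : ℝ → ℝ}

lemma memLp_two_restrict_Ioc_of_continuous (hf : Continuous f) (a b : ℝ) :
    MemLp (fun t => (f t : ℂ)) 2 (volume.restrict (Ioc a b)) := by
  have hfc : Continuous fun t => (f t : ℂ) := by fun_prop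
  rw [memLp_two_iff_integrable_sq_norm hfc.aestronglyMeasurable]
  exact (hfc.norm.pow 2).integrableOn_Ioc

lemma sq_mul_sq_norm_fourierCoeffOn_le (hT : 0 < T) (hf : ∀ t, HasDerivAt f (f' t) t)
    (hf' : Continuous f') (hper : f T = f 0) {i : ℤ} (hi : i ≠ 0) :
    (2 * π / T) ^ 2 * ‖fourierCoeffOn hT (fun t => (f t : ℂ)) i‖ ^ 2 ≤
      ‖fourierCoeffOn hT (fun t => (f' t : ℂ)) i‖ ^ 2 := by
  have hcoeff := fourierCoeffOn_of_hasDerivAt hT hi (fun x _ => (hf x).ofReal_comp)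
    ((Complex.continuous_ofReal.comp hf').intervalIntegrable _ _)
  have hnorm : ‖fourierCoeffOn hT (fun t => (f t : ℂ)) i‖ =
      T / (2 * π * |(i : ℝ)|) * ‖fourierCoeffOn hT (fun t => (f' t : ℂ)) i‖ := by
    rw [hcoeff, hper, sub_self, mul_zero, zero_sub, Complex.ofReal_zero, sub_zero]
    simp only [norm_mul, norm_div, norm_neg, norm_one, Complex.norm_ofNat, Complex.norm_real,
      Complex.norm_intCast, Complex.norm_I, norm_eq_abs, abs_of_pos hT, abs_of_pos pi_pos]
    ring
  have hi_sq : (1 : ℝ) ≤ |(i : ℝ)| ^ 2 := one_le_pow₀ (by exact_mod_cast Int.one_le_abs hi)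
  calc (2 * π / T) ^ 2 * ‖fourierCoeffOn hT (fun t => (f t : ℂ)) i‖ ^ 2
      = (|(i : ℝ)| ^ 2)⁻¹ * ‖fourierCoeffOn hT (fun t => (f' t : ℂ)) i‖ ^ 2 := by
        rw [hnorm]
        field_simp
    _ ≤ ‖fourierCoeffOn hT (fun t => (f' t : ℂ)) i‖ ^ 2 :=
        mul_le_of_le_one_left (by positivity) (inv_le_one_of_one_le₀ hi_sq)

theorem wirtinger_inequality (hT : 0 < T) (hf : ∀ t, HasDerivAt f (f' t) t)
    (hf' : Continuous f') (hper : f T = f 0) (hmean : ∫ t in 0..T, f t = 0) :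
    (2 * π / T) ^ 2 * ∫ t in 0..T, f t ^ 2 ≤ ∫ t in 0..T, f' t ^ 2 := by
  have hfc : Continuous f := continuous_iff_continuousAt.2 fun t => (hf t).continuousAt
  have parseval : ∀ g : ℝ → ℝ, Continuous g →
      HasSum (fun i => ‖fourierCoeffOn hT (fun t => (g t : ℂ)) i‖ ^ 2)
        (T⁻¹ * ∫ t in 0..T, g t ^ 2) := fun g hg => by
    simpa using hasSum_sq_fourierCoeffOn hT (memLp_two_restrict_Ioc_of_continuous hg 0 T)
  have hcoeff : ∀ i, (2 * π / T) ^ 2 * ‖fourierCoeffOn hT (fun t => (f t : ℂ)) i‖ ^ 2 ≤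
      ‖fourierCoeffOn hT (fun t => (f' t : ℂ)) i‖ ^ 2 := fun i => by
    rcases eq_or_ne i 0 with rfl | hi
    · have : fourierCoeffOn hT (fun t => (f t : ℂ)) 0 = 0 := by
        simp [fourierCoeffOn_eq_integral, integral_ofReal, hmean]
      simp [this]
    · exact sq_mul_sq_norm_fourierCoeffOn_le hT hf hf' hper hi
  have hsum := hasSum_le hcoeff ((parseval f hfc).mul_left _) (parseval f' hf')
  rw [mul_left_comm] at hsum
  exact le_of_mul_le_mul_left hsum (inv_pos.2 hT)

end Wirtinger

section Necessity

variable {u v s : ℝ → ℝ} {A B p T : ℝ}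

lemma periodic_of_hasDerivAt (hu : ∀ t, HasDerivAt u (v t) t) (hper : Function.Periodic u T) :
    Function.Periodic v T := fun t => by
  have hshift : HasDerivAt (fun x => u (x + T)) (v (t + T)) t := (hu (t + T)).comp_add_const t T
  rw [show (fun x => u (x + T)) = u from funext hper] at hshift
  exact hshift.unique (hu t)

lemma hasDerivAt_const_mul_sub_const_mul_rpow (hu : ∀ t, HasDerivAt u (v t) t)
    (hpos : ∀ t, 0 < u t) (hs : ∀ t, s t = A * u t - B * u t ^ p) (t : ℝ) :
    HasDerivAt s (p * (v t * s t / u t) - (p - 1) * A * v t) t := by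
  have hder := ((hu t).const_mul A).sub (((hu t).rpow_const (p := p)
    (Or.inl (hpos t).ne')).const_mul B)
  refine (hder.congr_of_eventuallyEq (.of_forall hs)).congr_deriv ?_
  have := (hpos t).ne'
  rw [hs, rpow_sub_one this]
  field_simp
  ring

lemma hasDerivAt_mul_sub_cube_div (hu : ∀ t, HasDerivAt u (v t) t)
    (hv : ∀ t, HasDerivAt v (s t) t) (hpos : ∀ t, 0 < u t)
    (hs : ∀ t, s t = A * u t - B * u t ^ p) (t : ℝ) :
    HasDerivAt (fun t => v t * s t - p / 3 * (v t ^ 3 / u t))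
      (s t ^ 2 - (p - 1) * A * v t ^ 2 + p / 3 * (v t ^ 4 / u t ^ 2)) t := by
  have := (hpos t).ne'
  refine (((hv t).mul (hasDerivAt_const_mul_sub_const_mul_rpow hu hpos hs t)).sub
    ((((hv t).pow 3).div (hu t) this).const_mul (p / 3))).congr_deriv ?_
  simp only [Nat.cast_ofNat, Pi.pow_apply]
  field_simp
  ring

lemma integral_sq_add_integral_pow_four_div (hu : ∀ t, HasDerivAt u (v t) t)
    (hv : ∀ t, HasDerivAt v (s t) t) (hpos : ∀ t, 0 < u t)
    (hs : ∀ t, s t = A * u t - B * u t ^ p) (hper : Function.Periodic u T) :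
    (∫ t in 0..T, s t ^ 2) + p / 3 * (∫ t in 0..T, v t ^ 4 / u t ^ 2) =
      (p - 1) * A * ∫ t in 0..T, v t ^ 2 := by
  have huc : Continuous u := continuous_iff_continuousAt.2 fun t => (hu t).continuousAt
  have hvc : Continuous v := continuous_iff_continuousAt.2 fun t => (hv t).continuousAt
  have hsc : Continuous s := continuous_iff_continuousAt.2 fun t =>
    (hasDerivAt_const_mul_sub_const_mul_rpow hu hpos hs t).continuousAt
  have hqc : Continuous fun t => v t ^ 4 / u t ^ 2 :=
    (hvc.pow 4).div (huc.pow 2) fun t => (pow_pos (hpos t) 2).ne'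
  have hvper := periodic_of_hasDerivAt hu hper
  have hsper := periodic_of_hasDerivAt hv hvper
  have hzero := integral_eq_sub_of_hasDerivAt (a := 0) (b := T)
    (fun t _ => hasDerivAt_mul_sub_cube_div hu hv hpos hs t)
    (Continuous.intervalIntegrable (by fun_prop) _ _)
  rw [hper.eq, hvper.eq, hsper.eq, sub_self, integral_add, integral_sub, integral_const_mul,
    integral_const_mul] at hzero
  · linarith
  all_goals exact Continuous.intervalIntegrable (by fun_prop) _ _

theorem sq_two_pi_div_lt_of_periodic (hT : 0 < T) (hp : 0 < p) (hu : ∀ t, HasDerivAt u (v t) t)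
    (hv : ∀ t, HasDerivAt v (s t) t) (hpos : ∀ t, 0 < u t)
    (hs : ∀ t, s t = A * u t - B * u t ^ p) (hper : Function.Periodic u T)
    (hnc : ¬ ∃ a, ∀ t, u t = a) : (2 * π / T) ^ 2 < (p - 1) * A := by
  have huc : Continuous u := continuous_iff_continuousAt.2 fun t => (hu t).continuousAt
  have hvc : Continuous v := continuous_iff_continuousAt.2 fun t => (hv t).continuousAt
  have hsc : Continuous s := continuous_iff_continuousAt.2 fun t =>
    (hasDerivAt_const_mul_sub_const_mul_rpow hu hpos hs t).continuousAt
  have hvper := periodic_of_hasDerivAt hu hper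
  obtain ⟨t₀, ht₀, hvt₀⟩ : ∃ t ∈ Icc 0 T, v t ≠ 0 := by
    by_contra! hzero
    refine hnc ⟨u 0, fun t => is_const_of_deriv_eq_zero (fun t => (hu t).differentiableAt)
      (fun t => ?_) t 0⟩
    obtain ⟨t', ht', hvt'⟩ := hvper.exists_mem_Ico₀ hT t
    rw [(hu t).deriv, hvt', hzero t' (Ico_subset_Icc_self ht')]
  have hv_sq : 0 < ∫ t in 0..T, v t ^ 2 :=
    integral_pos hT (by fun_prop) (fun t _ => sq_nonneg _) ⟨t₀, ht₀, by positivity⟩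
  have hquartic : 0 < ∫ t in 0..T, v t ^ 4 / u t ^ 2 :=
    integral_pos hT ((hvc.pow 4).div (huc.pow 2) fun t => (pow_pos (hpos t) 2).ne').continuousOn
      (fun t _ => by positivity) ⟨t₀, ht₀, div_pos (by positivity) (pow_pos (hpos t₀) 2)⟩
  have hmean : ∫ t in 0..T, v t = 0 := by
    rw [integral_eq_sub_of_hasDerivAt (fun t _ => hu t) (hvc.intervalIntegrable _ _), hper.eq,
      sub_self]
  have hwirtinger := wirtinger_inequality hT hv hsc hvper.eq hmean
  have hidentity := integral_sq_add_integral_pow_four_div hu hv hpos hs hper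
  have : 0 < p / 3 * ∫ t in 0..T, v t ^ 4 / u t ^ 2 := by positivity
  exact lt_of_mul_lt_mul_right (by linarith) hv_sq.le

end Necessity

section Phase

lemma exists_phase {g : ℝ → ℝ} {c : ℝ} (hg : Continuous g) (hpos : ∀ x, 0 < g x) (hc : 0 < c)
    (hper : Function.Periodic g c) :
    ∃ Φ : ℝ ≃o ℝ, (∀ t, HasDerivAt Φ (g (Φ t))⁻¹ t) ∧
      ∀ t, Φ (t + ∫ x in 0..c, g x) = Φ t + c := by
  have hgi : ∀ a b, IntervalIntegrable g MeasureTheory.volume a b := hg.intervalIntegrable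
  set τ : ℝ → ℝ := fun φ => ∫ x in 0..φ, g x
  have hτ_deriv : ∀ φ, HasDerivAt τ (g φ) φ := fun φ =>
    integral_hasDerivAt_right (hgi _ _) (hg.stronglyMeasurableAtFilter _ _) hg.continuousAt
  have hτ_cont : Continuous τ := continuous_iff_continuousAt.2 fun φ => (hτ_deriv φ).continuousAt
  have hτ_surj : Function.Surjective τ := hτ_cont.surjective
    (hper.tendsto_atTop_intervalIntegral_of_pos' (hgi _ _) hpos hc)
    (hper.tendsto_atBot_intervalIntegral_of_pos' (hgi _ _) hpos hc)
  let e : ℝ ≃o ℝ := (strictMono_of_hasDerivAt_pos hτ_deriv hpos).orderIsoOfSurjective τ hτ_surj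
  refine ⟨e.symm, fun t => ?_, fun t => ?_⟩
  · exact (hτ_deriv (e.symm t)).of_local_left_inverse e.symm.continuous.continuousAt
      (hpos _).ne' (.of_forall e.apply_symm_apply)
  · rw [e.symm_apply_eq]
    calc t + ∫ x in 0..c, g x = τ (e.symm t) + ∫ x in 0..c, g x :=
          congrArg (· + _) (e.apply_symm_apply t).symm
      _ = τ (e.symm t + c) := by
          simpa using (hper.intervalIntegral_add_eq_add 0 (e.symm t) hgi).symm

lemma hasMinimalPeriod_sin_comp {Φ : ℝ ≃o ℝ} {T : ℝ} (hΦ : ∀ t, Φ (t + T) = Φ t + 2 * π) :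
    HasMinimalPeriod (fun t => sin (Φ t)) T := by
  refine ⟨fun t => by simp only [hΦ, sin_add_two_pi], fun T' hT' hlt hper => ?_⟩
  obtain ⟨t₀, hΦt₀⟩ := Φ.surjective (π / 2)
  have hcos : cos (Φ (t₀ + T') - π / 2) = 1 := by
    rw [cos_sub_pi_div_two, ← sin_pi_div_two, ← hΦt₀]
    exact hper t₀
  have hgt : Φ t₀ < Φ (t₀ + T') := Φ.strictMono (by linarith)
  have hlt : Φ (t₀ + T') < Φ (t₀ + T) := Φ.strictMono (by linarith)
  rw [hΦ] at hlt
  have := (cos_eq_one_iff_of_lt_of_lt (by linarith) (by linarith)).1 hcos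
  linarith

end Phase

section Oscillation

/-- The period of the oscillation of amplitude `a` in a coordinate `r` with `dx = X' dr` in which
the energy is `(ẋ² + r²) / 2`: along `r = a sin φ`, `ẋ = a cos φ` one has `dt = X' (a sin φ) dφ`. -/
noncomputable def oscillationPeriod (X' : ℝ → ℝ) (a : ℝ) : ℝ :=
  ∫ φ in 0..2 * π, X' (a * sin φ)

variable {X X' : ℝ → ℝ} {a b k : ℝ}

lemma mul_sin_mem_Icc (ha : 0 ≤ a) (φ : ℝ) : a * sin φ ∈ Icc (-a) a :=
  ⟨by nlinarith [neg_one_le_sin φ], mul_le_of_le_one_right ha (sin_le_one φ)⟩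

lemma continuous_comp_mul_sin (ha : 0 ≤ a) (hX' : ContinuousOn X' (Icc (-a) a)) :
    Continuous fun φ => X' (a * sin φ) :=
  hX'.comp_continuous (by fun_prop) (mul_sin_mem_Icc ha)

theorem exists_oscillation (ha : 0 < a) (hX : ∀ r ∈ Icc (-a) a, HasDerivAt X (X' r) r)
    (hX' : ContinuousOn X' (Icc (-a) a)) (hpos : ∀ r ∈ Icc (-a) a, 0 < X' r) :
    ∃ r v : ℝ → ℝ, (∀ t, r t ∈ Icc (-a) a) ∧ (∀ t, HasDerivAt (fun t => X (r t)) (v t) t) ∧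
      (∀ t, HasDerivAt v (-(r t / X' (r t))) t) ∧
      HasMinimalPeriod r (oscillationPeriod X' a) := by
  have hmem := mul_sin_mem_Icc ha.le
  obtain ⟨Φ, hΦ, hΦ_add⟩ := exists_phase (continuous_comp_mul_sin ha.le hX')
    (fun φ => hpos _ (hmem φ)) two_pi_pos fun φ => by simp only [sin_add_two_pi]
  refine ⟨fun t => a * sin (Φ t), fun t => a * cos (Φ t), fun t => hmem _, fun t => ?_,
    fun t => ?_, ?_⟩
  · have := (hpos _ (hmem (Φ t))).ne'
    refine ((hX _ (hmem (Φ t))).comp t ((hΦ t).sin.const_mul a)).congr_deriv ?_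
    field_simp
  · refine ((hΦ t).cos.const_mul a).congr_deriv ?_
    ring
  · exact (hasMinimalPeriod_sin_comp hΦ_add).comp_injOn (s := univ) (fun _ => mem_univ _)
      (mul_right_injective₀ ha.ne').injOn

lemma oscillationPeriod_zero : oscillationPeriod X' 0 = 2 * π * X' 0 := by
  simp [oscillationPeriod]

lemma continuousOn_oscillationPeriod (hX' : ContinuousOn X' (Icc (-b) b)) :
    ContinuousOn (oscillationPeriod X') (Icc 0 b) := by
  rw [continuousOn_iff_continuous_domRestrict]
  refine continuous_parametric_intervalIntegral_of_continuous'
    (f := fun (a : Icc 0 b) φ => X' (a * sin φ)) ?_ _ _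
  refine hX'.comp_continuous (by fun_prop) fun q => ?_
  obtain ⟨⟨a, ha, hab⟩, φ⟩ := q
  exact Icc_subset_Icc (neg_le_neg hab) hab (mul_sin_mem_Icc ha φ)

lemma log_div_le_mul_oscillationPeriod (ha : 0 ≤ a) (hk : 0 ≤ k)
    (hX : ∀ r ∈ Icc (-a) a, HasDerivAt X (X' r) r) (hX' : ContinuousOn X' (Icc (-a) a))
    (hpos : ∀ r ∈ Icc (-a) a, 0 < X' r) (hX_pos : ∀ r ∈ Icc (-a) a, 0 < X r)
    (hle : ∀ r ∈ Icc (-a) a, a ^ 2 - r ^ 2 ≤ (k * X r) ^ 2) :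
    log (X 0 / X (-a)) ≤ k * oscillationPeriod X' a := by
  have hmem := mul_sin_mem_Icc ha
  have hX'c := continuous_comp_mul_sin ha hX'
  have hXc : Continuous fun φ => X (a * sin φ) :=
    continuous_comp_mul_sin ha fun r hr => (hX r hr).continuousAt.continuousWithinAt
  set ℓ' : ℝ → ℝ := fun φ => X' (a * sin φ) * (a * cos φ) / X (a * sin φ) with hℓ'
  have hℓ : ∀ φ, HasDerivAt (fun φ => log (X (a * sin φ))) (ℓ' φ) φ := fun φ =>
    ((hX _ (hmem φ)).comp φ ((hasDerivAt_sin φ).const_mul a)).log (hX_pos _ (hmem φ)).ne'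
  have hℓ'c : Continuous ℓ' :=
    (hX'c.mul (by fun_prop)).div hXc fun φ => (hX_pos _ (hmem φ)).ne'
  have hℓ'_le : ∀ φ, ℓ' φ ≤ k * X' (a * sin φ) := fun φ => by
    have hX_pos := hX_pos _ (hmem φ)
    have hcos : a * cos φ ≤ k * X (a * sin φ) := by
      refine le_of_abs_le (abs_le_of_sq_le_sq ?_ (by positivity))
      have hsq : a ^ 2 - (a * sin φ) ^ 2 = (a * cos φ) ^ 2 := by
        rw [mul_pow, mul_pow, cos_sq']
        ring
      exact hsq ▸ hle _ (hmem φ)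
    rw [hℓ', div_le_iff₀ hX_pos]
    nlinarith [mul_le_mul_of_nonneg_left hcos (hpos _ (hmem φ)).le]
  have hsin : sin (3 * π / 2) = -1 := by
    rw [show 3 * π / 2 = π / 2 + π by ring, sin_add_pi, sin_pi_div_two]
  have h0 : (0 : ℝ) ∈ Icc (-a) a := ⟨by linarith, ha⟩
  have ha' : -a ∈ Icc (-a) a := ⟨le_rfl, by linarith⟩
  calc log (X 0 / X (-a)) = ∫ φ in (3 * π / 2)..(2 * π), ℓ' φ := by
        rw [integral_eq_sub_of_hasDerivAt (fun φ _ => hℓ φ) (hℓ'c.intervalIntegrable _ _), hsin,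
          sin_two_pi, mul_zero, mul_neg_one, log_div (hX_pos _ h0).ne' (hX_pos _ ha').ne']
    _ ≤ ∫ φ in (3 * π / 2)..(2 * π), k * X' (a * sin φ) :=
        integral_mono (by linarith [pi_pos]) (hℓ'c.intervalIntegrable _ _)
          ((hX'c.const_mul k).intervalIntegrable _ _) hℓ'_le
    _ ≤ ∫ φ in 0..2 * π, k * X' (a * sin φ) :=
        integral_mono_interval (by positivity) (by linarith [pi_pos]) le_rfl
          (.of_forall fun φ => mul_nonneg hk (hpos _ (hmem φ)).le)
          ((hX'c.const_mul k).intervalIntegrable _ _)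
    _ = k * oscillationPeriod X' a := integral_const_mul _ _

end Oscillation

section PotentialWell

/-- `V` is a potential on the open interval `s` with `V' = f` (the force being `-f`), whose
only critical point is a minimum at `c`, nondegenerate with frequency `ω = √(V''(c))`. -/
structure IsPotentialWell (V f : ℝ → ℝ) (s : Set ℝ) (c ω : ℝ) : Prop where
  isOpen : IsOpen s
  ordConnected : s.OrdConnected
  mem : c ∈ s
  pos : 0 < ω
  hasDerivAt_potential : ∀ x ∈ s, HasDerivAt V (f x) x
  continuousOn : ContinuousOn f s
  hasDerivAt_force : HasDerivAt f (ω ^ 2) c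
  mul_sub_pos : ∀ x ∈ s, x ≠ c → 0 < f x * (x - c)

/-- The coordinate `r` with `r ^ 2 / 2 = V x - V c` that increases with `x`. In it every potential
well becomes the harmonic one. -/
noncomputable def wellCoord (V : ℝ → ℝ) (c x : ℝ) : ℝ :=
  Real.sign (x - c) * √(2 * (V x - V c))

/-- The derivative of `wellCoord`, with its limiting value `ω` filled in at `c`, where
`f x / wellCoord V c x` is `0 / 0`. -/
noncomputable def wellCoordDeriv (V f : ℝ → ℝ) (c ω : ℝ) : ℝ → ℝ :=
  Function.update (fun x => f x / wellCoord V c x) c ω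

lemma tendsto_sub_div_sq_of_hasDerivAt {V f : ℝ → ℝ} {c m : ℝ}
    (hV : ∀ᶠ x in 𝓝 c, HasDerivAt V (f x) x) (hf : HasDerivAt f m c) (hfc : f c = 0) :
    Tendsto (fun x => (V x - V c) / (x - c) ^ 2) (𝓝[≠] c) (𝓝 (m / 2)) := by
  have hVc : Tendsto (fun x => V x - V c) (𝓝[≠] c) (𝓝 0) :=
    (sub_self (V c) ▸ hV.self_of_nhds.continuousAt.tendsto.sub_const (V c)).mono_left
      nhdsWithin_le_nhds
  have hsq : Tendsto (fun x => (x - c) ^ 2) (𝓝[≠] c) (𝓝 0) :=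
    (Continuous.tendsto' (by fun_prop) c 0 (by simp)).mono_left nhdsWithin_le_nhds
  refine HasDerivAt.lhopital_zero_nhdsNE (f' := f) (g' := fun x => 2 * (x - c))
    ((hV.filter_mono nhdsWithin_le_nhds).mono fun x hx => hx.sub_const _)
    (.of_forall fun x => ?_) ?_ hVc hsq ?_
  · simpa using ((hasDerivAt_id x).sub_const c).fun_pow 2
  · filter_upwards [self_mem_nhdsWithin] with x hx
    exact mul_ne_zero two_ne_zero (sub_ne_zero.2 hx)
  · refine ((hasDerivAt_iff_tendsto_slope.1 hf).div_const 2).congr fun x => ?_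
    rw [slope_def_field, hfc, sub_zero, div_div, mul_comm]

lemma isOpen_image_of_strictMonoOn {g : ℝ → ℝ} {s : Set ℝ} (hs : IsOpen s)
    (hgc : ContinuousOn g s) (hg : StrictMonoOn g s) : IsOpen (g '' s) := by
  rw [isOpen_iff_mem_nhds]
  rintro _ ⟨x, hx, rfl⟩
  obtain ⟨a, b, ⟨hax, hxb⟩, hab⟩ := mem_nhds_iff_exists_Ioo_subset.1 (hs.mem_nhds hx)
  obtain ⟨a', haa', ha'x⟩ := exists_between hax
  obtain ⟨b', hxb', hb'b⟩ := exists_between hxb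
  have hsub : Icc a' b' ⊆ s := (Icc_subset_Ioo haa' hb'b).trans hab
  have hle : a' ≤ b' := (ha'x.trans hxb').le
  refine Filter.mem_of_superset (Icc_mem_nhds (hg (hsub ⟨le_rfl, hle⟩) hx ha'x)
    (hg hx (hsub ⟨hle, le_rfl⟩) hxb')) ?_
  exact (intermediate_value_Icc hle (hgc.mono hsub)).trans (image_mono hsub)

lemma hasDerivAt_invFunOn {g : ℝ → ℝ} {s : Set ℝ} {m x : ℝ} (hs : IsOpen s)
    (hgc : ContinuousOn g s) (hmono : StrictMonoOn g s) (hx : x ∈ s) (hg : HasDerivAt g m x)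
    (hm : m ≠ 0) : HasDerivAt (Function.invFunOn g s) m⁻¹ (g x) := by
  have hleft : LeftInvOn (Function.invFunOn g s) g s := hmono.injOn.leftInvOn_invFunOn
  have himage : g '' s ∈ 𝓝 (g x) :=
    (isOpen_image_of_strictMonoOn hs hgc hmono).mem_nhds (mem_image_of_mem g hx)
  have hinv_mono : StrictMonoOn (Function.invFunOn g s) (g '' s) := by
    rintro _ ⟨y, hy, rfl⟩ _ ⟨z, hz, rfl⟩ hlt
    rwa [hleft hy, hleft hz, ← hmono.lt_iff_lt hy hz]
  have hcont : ContinuousAt (Function.invFunOn g s) (g x) := by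
    refine hinv_mono.continuousAt_of_image_mem_nhds himage ?_
    rw [hleft.image_image, hleft hx]
    exact hs.mem_nhds hx
  exact HasDerivAt.of_local_left_inverse hcont ((hleft hx).symm ▸ hg) hm
    (Filter.mem_of_superset himage fun _ => Function.invFunOn_eq)

/-- The inverse of `wellCoord` on `s`. -/
noncomputable def wellInv (V : ℝ → ℝ) (s : Set ℝ) (c : ℝ) : ℝ → ℝ :=
  Function.invFunOn (wellCoord V c) s

/-- The derivative of `wellInv`. -/
noncomputable def wellInvDeriv (V f : ℝ → ℝ) (s : Set ℝ) (c ω r : ℝ) : ℝ :=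
  (wellCoordDeriv V f c ω (wellInv V s c r))⁻¹

variable {V f : ℝ → ℝ} {s : Set ℝ} {c ω r x : ℝ}

variable (V c) in
lemma wellCoord_self : wellCoord V c c = 0 := by simp [wellCoord]

lemma wellInv_mem (hr : r ∈ wellCoord V c '' s) : wellInv V s c r ∈ s := Function.invFunOn_mem hr

lemma wellCoord_wellInv (hr : r ∈ wellCoord V c '' s) : wellCoord V c (wellInv V s c r) = r :=
  Function.invFunOn_eq hr

lemma injOn_wellInv : InjOn (wellInv V s c) (wellCoord V c '' s) :=
  LeftInvOn.injOn fun _ => wellCoord_wellInv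

namespace IsPotentialWell

lemma lt_potential (h : IsPotentialWell V f s c ω) (hx : x ∈ s) (hxc : x ≠ c) : V c < V x := by
  have hderiv : ∀ y ∈ uIcc x c, HasDerivAt V (f y) y := fun y hy =>
    h.hasDerivAt_potential y (h.ordConnected.uIcc_subset hx h.mem hy)
  rcases hxc.lt_or_gt with hlt | hlt
  · rw [uIcc_of_le hlt.le] at hderiv
    obtain ⟨y, ⟨hxy, hyc⟩, hy⟩ := exists_hasDerivAt_eq_slope V f hlt
      (fun z hz => (hderiv z hz).continuousAt.continuousWithinAt)
      fun z hz => hderiv z (Ioo_subset_Icc_self hz)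
    have hf := h.mul_sub_pos y (h.ordConnected.out hx h.mem ⟨hxy.le, hyc.le⟩) hyc.ne
    have : (V c - V x) / (c - x) < 0 := hy ▸ neg_of_mul_pos_left hf (by linarith)
    rw [div_lt_iff₀ (by linarith)] at this
    linarith
  · rw [uIcc_of_ge hlt.le] at hderiv
    obtain ⟨y, ⟨hcy, hyx⟩, hy⟩ := exists_hasDerivAt_eq_slope V f hlt
      (fun z hz => (hderiv z hz).continuousAt.continuousWithinAt)
      fun z hz => hderiv z (Ioo_subset_Icc_self hz)
    have hf := h.mul_sub_pos y (h.ordConnected.out h.mem hx ⟨hcy.le, hyx.le⟩) hcy.ne'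
    have : 0 < (V x - V c) / (x - c) := hy ▸ pos_of_mul_pos_left hf (by linarith)
    rw [lt_div_iff₀ (by linarith)] at this
    linarith

lemma force_eq_zero (h : IsPotentialWell V f s c ω) : f c = 0 := by
  refine IsLocalMin.hasDerivAt_eq_zero ?_ (h.hasDerivAt_potential c h.mem)
  filter_upwards [h.isOpen.mem_nhds h.mem] with x hx
  rcases eq_or_ne x c with rfl | hxc
  exacts [le_rfl, (h.lt_potential hx hxc).le]

lemma sq_wellCoord (h : IsPotentialWell V f s c ω) (hx : x ∈ s) :
    wellCoord V c x ^ 2 = 2 * (V x - V c) := by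
  rcases eq_or_ne x c with rfl | hxc
  · simp [wellCoord_self]
  · have hV := h.lt_potential hx hxc
    have : Real.sign (x - c) ^ 2 = 1 := by
      rcases Real.sign_apply_eq_of_ne_zero _ (sub_ne_zero.2 hxc) with hs | hs <;> simp [hs]
    rw [wellCoord, mul_pow, this, one_mul, sq_sqrt (by linarith)]

lemma force_div_wellCoord_pos (h : IsPotentialWell V f s c ω) (hx : x ∈ s) (hxc : x ≠ c) :
    0 < f x / wellCoord V c x := by
  have hsqrt : 0 < √(2 * (V x - V c)) := sqrt_pos.2 (by linarith [h.lt_potential hx hxc])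
  have hf := h.mul_sub_pos x hx hxc
  rcases hxc.lt_or_gt with hlt | hlt
  · rw [wellCoord, sign_of_neg (sub_neg.2 hlt)]
    exact div_pos_of_neg_of_neg (neg_of_mul_pos_left hf (by linarith)) (by linarith)
  · rw [wellCoord, sign_of_pos (sub_pos.2 hlt)]
    exact div_pos (pos_of_mul_pos_left hf (by linarith)) (by linarith)

lemma wellCoord_ne_zero (h : IsPotentialWell V f s c ω) (hx : x ∈ s) (hxc : x ≠ c) :
    wellCoord V c x ≠ 0 := fun h0 => by
  simpa [h0] using h.force_div_wellCoord_pos hx hxc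

lemma tendsto_force_div_wellCoord (h : IsPotentialWell V f s c ω) :
    Tendsto (fun x => f x / wellCoord V c x) (𝓝[≠] c) (𝓝 ω) := by
  have hω := h.pos
  have hs := h.isOpen.mem_nhds h.mem
  have hV := (tendsto_sub_div_sq_of_hasDerivAt (Filter.mem_of_superset hs h.hasDerivAt_potential)
    h.hasDerivAt_force h.force_eq_zero).const_mul 2
  have hf := (hasDerivAt_iff_tendsto_slope.1 h.hasDerivAt_force).pow 2
  have hquot := (hf.div hV (by positivity)).sqrt
  rw [show √((ω ^ 2) ^ 2 / (2 * (ω ^ 2 / 2))) = ω by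
    rw [show (ω ^ 2) ^ 2 / (2 * (ω ^ 2 / 2)) = ω ^ 2 by field_simp, sqrt_sq hω.le]] at hquot
  refine hquot.congr' ?_
  filter_upwards [self_mem_nhdsWithin, nhdsWithin_le_nhds hs] with x hxc hx
  rw [Pi.div_apply, sqrt_eq_iff_mul_self_eq_of_pos (h.force_div_wellCoord_pos hx hxc), ← sq,
    div_pow, h.sq_wellCoord hx, slope_def_field, h.force_eq_zero]
  have := sub_ne_zero.2 hxc
  field_simp
  ring

lemma hasDerivAt_wellCoord_of_ne (h : IsPotentialWell V f s c ω) (hx : x ∈ s) (hxc : x ≠ c) :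
    HasDerivAt (wellCoord V c) (f x / wellCoord V c x) x := by
  have hV : 0 < 2 * (V x - V c) := by linarith [h.lt_potential hx hxc]
  have hsign : ∀ᶠ y in 𝓝 x, Real.sign (y - c) = Real.sign (x - c) := by
    rcases hxc.lt_or_gt with hlt | hlt
    · filter_upwards [Iio_mem_nhds hlt] with y hy
      rw [sign_of_neg (sub_neg.2 hlt), sign_of_neg (sub_neg.2 hy)]
    · filter_upwards [Ioi_mem_nhds hlt] with y hy
      rw [sign_of_pos (sub_pos.2 hlt), sign_of_pos (sub_pos.2 hy)]
  have hsqrt := ((((h.hasDerivAt_potential x hx).sub_const (V c)).const_mul 2).sqrt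
    hV.ne').const_mul (Real.sign (x - c))
  refine (hsqrt.congr_of_eventuallyEq ?_).congr_deriv ?_
  · filter_upwards [hsign] with y hy
    rw [wellCoord, hy]
  · have := sqrt_pos.2 hV
    rcases Real.sign_apply_eq_of_ne_zero _ (sub_ne_zero.2 hxc) with hs | hs <;>
    · rw [wellCoord, hs]
      field_simp

lemma continuousAt_wellCoordDeriv (h : IsPotentialWell V f s c ω) (hx : x ∈ s) :
    ContinuousAt (wellCoordDeriv V f c ω) x := by
  rcases eq_or_ne x c with rfl | hxc
  · exact continuousAt_update_same.2 h.tendsto_force_div_wellCoord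
  · exact (continuousAt_update_of_ne hxc).2 <| (h.continuousOn.continuousAt
      (h.isOpen.mem_nhds hx)).div (h.hasDerivAt_wellCoord_of_ne hx hxc).continuousAt
      (h.wellCoord_ne_zero hx hxc)

lemma hasDerivAt_wellCoord (h : IsPotentialWell V f s c ω) (hx : x ∈ s) :
    HasDerivAt (wellCoord V c) (wellCoordDeriv V f c ω x) x := by
  rcases eq_or_ne x c with rfl | hxc
  · have hω := h.pos.ne'
    rw [hasDerivAt_iff_tendsto_slope, wellCoordDeriv, Function.update_self]
    have hquot := (hasDerivAt_iff_tendsto_slope.1 h.hasDerivAt_force).div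
      h.tendsto_force_div_wellCoord hω
    rw [sq, mul_div_cancel_right₀ _ hω] at hquot
    refine hquot.congr' ?_
    filter_upwards [self_mem_nhdsWithin, nhdsWithin_le_nhds (h.isOpen.mem_nhds hx)] with y hyx hy
    have hf : f y ≠ 0 := left_ne_zero_of_mul (h.mul_sub_pos y hy hyx).ne'
    simp only [Pi.div_apply, slope_def_field, h.force_eq_zero, wellCoord_self, sub_zero]
    rw [div_div_div_comm, div_self hf, one_div, inv_div]
  · simpa [wellCoordDeriv, hxc] using h.hasDerivAt_wellCoord_of_ne hx hxc

lemma wellCoordDeriv_pos (h : IsPotentialWell V f s c ω) (hx : x ∈ s) :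
    0 < wellCoordDeriv V f c ω x := by
  rcases eq_or_ne x c with rfl | hxc
  · simpa [wellCoordDeriv] using h.pos
  · simpa [wellCoordDeriv, hxc] using h.force_div_wellCoord_pos hx hxc

lemma wellCoord_mul_wellCoordDeriv (h : IsPotentialWell V f s c ω) (hx : x ∈ s) :
    wellCoord V c x * wellCoordDeriv V f c ω x = f x := by
  rcases eq_or_ne x c with rfl | hxc
  · simp [wellCoord_self, h.force_eq_zero]
  · simp [wellCoordDeriv, hxc, mul_div_cancel₀ _ (h.wellCoord_ne_zero hx hxc)]

lemma continuousOn_wellCoord (h : IsPotentialWell V f s c ω) : ContinuousOn (wellCoord V c) s :=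
  fun _ hx => (h.hasDerivAt_wellCoord hx).continuousAt.continuousWithinAt

lemma strictMonoOn_wellCoord (h : IsPotentialWell V f s c ω) : StrictMonoOn (wellCoord V c) s :=
  strictMonoOn_of_hasDerivWithinAt_pos h.ordConnected.convex h.continuousOn_wellCoord
    (fun _ hx => (h.hasDerivAt_wellCoord (interior_subset hx)).hasDerivWithinAt)
    fun _ hx => h.wellCoordDeriv_pos (interior_subset hx)

lemma wellCoord_nonpos (h : IsPotentialWell V f s c ω) (hx : x ∈ s) (hxc : x ≤ c) :
    wellCoord V c x ≤ 0 :=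
  wellCoord_self V c ▸ h.strictMonoOn_wellCoord.monotoneOn hx h.mem hxc

lemma wellInv_wellCoord (h : IsPotentialWell V f s c ω) (hx : x ∈ s) :
    wellInv V s c (wellCoord V c x) = x :=
  h.strictMonoOn_wellCoord.injOn.leftInvOn_invFunOn hx

lemma wellInv_zero (h : IsPotentialWell V f s c ω) : wellInv V s c 0 = c := by
  rw [← wellCoord_self V c, h.wellInv_wellCoord h.mem]

lemma wellInvDeriv_zero (h : IsPotentialWell V f s c ω) : wellInvDeriv V f s c ω 0 = ω⁻¹ := by
  rw [wellInvDeriv, h.wellInv_zero, wellCoordDeriv, Function.update_self]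

lemma wellInvDeriv_pos (h : IsPotentialWell V f s c ω) (hr : r ∈ wellCoord V c '' s) :
    0 < wellInvDeriv V f s c ω r :=
  inv_pos.2 (h.wellCoordDeriv_pos (wellInv_mem hr))

lemma hasDerivAt_wellInv (h : IsPotentialWell V f s c ω) (hr : r ∈ wellCoord V c '' s) :
    HasDerivAt (wellInv V s c) (wellInvDeriv V f s c ω r) r := by
  have hx := wellInv_mem hr
  have hderiv := hasDerivAt_invFunOn h.isOpen h.continuousOn_wellCoord h.strictMonoOn_wellCoord hx
    (h.hasDerivAt_wellCoord hx) (h.wellCoordDeriv_pos hx).ne'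
  rwa [wellCoord_wellInv hr] at hderiv

lemma continuousOn_wellInvDeriv (h : IsPotentialWell V f s c ω) :
    ContinuousOn (wellInvDeriv V f s c ω) (wellCoord V c '' s) := fun r hr => by
  have hx := wellInv_mem hr
  exact (((h.continuousAt_wellCoordDeriv hx).comp (h.hasDerivAt_wellInv hr).continuousAt).inv₀
    (h.wellCoordDeriv_pos hx).ne').continuousWithinAt

lemma div_wellInvDeriv (h : IsPotentialWell V f s c ω) (hr : r ∈ wellCoord V c '' s) :
    r / wellInvDeriv V f s c ω r = f (wellInv V s c r) := by
  rw [← h.wellCoord_mul_wellCoordDeriv (wellInv_mem hr), wellCoord_wellInv hr, wellInvDeriv,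
    div_inv_eq_mul]

lemma Icc_wellCoord_subset_image (h : IsPotentialWell V f s c ω) {y z : ℝ} (hy : y ∈ s)
    (hz : z ∈ s) (hyc : y ≤ c) (hcz : c ≤ z) (hV : V y ≤ V z) :
    Icc (wellCoord V c y) (-wellCoord V c y) ⊆ wellCoord V c '' s := by
  have hz_nonneg : 0 ≤ wellCoord V c z :=
    wellCoord_self V c ▸ h.strictMonoOn_wellCoord.monotoneOn h.mem hz hcz
  have hle : -wellCoord V c y ≤ wellCoord V c z := by
    refine le_of_abs_le (abs_le_of_sq_le_sq ?_ hz_nonneg)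
    rw [neg_sq, h.sq_wellCoord hy, h.sq_wellCoord hz]
    linarith
  have hyz : Icc y z ⊆ s := h.ordConnected.out hy hz
  exact (Icc_subset_Icc_right hle).trans <| (intermediate_value_Icc (hyc.trans hcz)
    (h.continuousOn_wellCoord.mono hyz)).trans (image_mono hyz)

lemma log_div_le_mul_oscillationPeriod_wellInvDeriv (h : IsPotentialWell V f s c ω)
    (hs : ∀ x ∈ s, 0 < x) {k y : ℝ} (hk : 0 ≤ k) (hy : y ∈ s) (hyc : y ≤ c)
    (himage : Icc (wellCoord V c y) (-wellCoord V c y) ⊆ wellCoord V c '' s)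
    (hle : ∀ x ∈ s, 2 * (V y - V x) ≤ (k * x) ^ 2) :
    log (c / y) ≤ k * oscillationPeriod (wellInvDeriv V f s c ω) (-wellCoord V c y) := by
  have hb : 0 ≤ -wellCoord V c y := neg_nonneg.2 (h.wellCoord_nonpos hy hyc)
  have hlog := log_div_le_mul_oscillationPeriod (X := wellInv V s c) (k := k) hb hk
    (fun r hr => h.hasDerivAt_wellInv (himage (by rwa [neg_neg] at hr)))
    (h.continuousOn_wellInvDeriv.mono (by rwa [neg_neg]))
    (fun r hr => h.wellInvDeriv_pos (himage (by rwa [neg_neg] at hr)))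
    (fun r hr => hs _ (wellInv_mem (himage (by rwa [neg_neg] at hr)))) fun r hr => ?_
  · rwa [neg_neg, h.wellInv_zero, h.wellInv_wellCoord hy] at hlog
  · rw [neg_neg] at hr
    have hx := wellInv_mem (himage hr)
    have hsq := h.sq_wellCoord hx
    rw [wellCoord_wellInv (himage hr)] at hsq
    rw [neg_sq, h.sq_wellCoord hy, hsq]
    linarith [hle _ hx]

theorem exists_hasMinimalPeriod_of_le_oscillationPeriod (h : IsPotentialWell V f s c ω) {b T : ℝ}
    (hb : 0 ≤ b) (hbs : Icc (-b) b ⊆ wellCoord V c '' s) (hT : 2 * π / ω < T)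
    (hTb : T ≤ oscillationPeriod (wellInvDeriv V f s c ω) b) :
    ∃ x v : ℝ → ℝ, (∀ t, x t ∈ s) ∧ (∀ t, HasDerivAt x (v t) t) ∧
      (∀ t, HasDerivAt v (-f (x t)) t) ∧ HasMinimalPeriod x T := by
  have hzero : oscillationPeriod (wellInvDeriv V f s c ω) 0 = 2 * π / ω := by
    rw [oscillationPeriod_zero, h.wellInvDeriv_zero, div_eq_mul_inv]
  obtain ⟨a, ⟨ha, hab⟩, haT⟩ := intermediate_value_Icc hb
    (continuousOn_oscillationPeriod (h.continuousOn_wellInvDeriv.mono hbs))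
    ⟨hzero.trans_le hT.le, hTb⟩
  have ha_pos : 0 < a := ha.lt_of_ne fun h0 => hT.ne (by rw [← hzero, ← haT, h0])
  have has : Icc (-a) a ⊆ wellCoord V c '' s := (Icc_subset_Icc (neg_le_neg hab) hab).trans hbs
  obtain ⟨r, v, hr, hx, hv, hper⟩ := exists_oscillation ha_pos
    (fun r hr => h.hasDerivAt_wellInv (has hr)) (h.continuousOn_wellInvDeriv.mono has)
    fun r hr => h.wellInvDeriv_pos (has hr)
  refine ⟨fun t => wellInv V s c (r t), v, fun t => wellInv_mem (has (hr t)), hx, fun t => ?_,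
    haT ▸ hper.comp_injOn (fun t => has (hr t)) injOn_wellInv⟩
  rw [← h.div_wellInvDeriv (has (hr t))]
  exact hv t

end IsPotentialWell

end PotentialWell

section Yamabe

/-- The potential energy of the equation `u'' - A u + B u ^ p = 0`. -/
noncomputable def yamabePotential (A B p y : ℝ) : ℝ :=
  B / (p + 1) * y ^ (p + 1) - A / 2 * y ^ 2

/-- The derivative of `yamabePotential`, so that the equation reads `u'' = -yamabeForce A B p u`. -/
noncomputable def yamabeForce (A B p y : ℝ) : ℝ :=
  B * y ^ p - A * y

/-- The positive constant solution of `u'' - A u + B u ^ p = 0`. -/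
noncomputable def yamabeConst (A B p : ℝ) : ℝ :=
  (A / B) ^ (p - 1)⁻¹

variable {A B p T y : ℝ}

lemma yamabeConst_pos (hA : 0 < A) (hB : 0 < B) : 0 < yamabeConst A B p := by
  unfold yamabeConst
  positivity

lemma yamabeConst_rpow (hA : 0 < A) (hB : 0 < B) (hp : 1 < p) :
    yamabeConst A B p ^ (p - 1) = A / B :=
  rpow_inv_rpow (by positivity) (by linarith)

lemma rpow_eq_mul_rpow_sub_one (hy : 0 < y) : y ^ p = y * y ^ (p - 1) := by
  rw [rpow_sub_one hy.ne', mul_div_cancel₀ _ hy.ne']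

lemma yamabeForce_eq_mul (hA : 0 < A) (hB : 0 < B) (hp : 1 < p) (hy : 0 < y) :
    yamabeForce A B p y = B * y * (y ^ (p - 1) - yamabeConst A B p ^ (p - 1)) := by
  rw [yamabeConst_rpow hA hB hp, yamabeForce, rpow_eq_mul_rpow_sub_one hy]
  field_simp

lemma yamabePotential_eq_mul (hy : 0 < y) :
    yamabePotential A B p y = y ^ 2 * (B / (p + 1) * y ^ (p - 1) - A / 2) := by
  rw [yamabePotential, rpow_add_one hy.ne', rpow_eq_mul_rpow_sub_one hy]
  ring

lemma hasDerivAt_yamabePotential (hp : p + 1 ≠ 0) (hy : 0 < y) :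
    HasDerivAt (yamabePotential A B p) (yamabeForce A B p y) y := by
  refine (((hasDerivAt_rpow_const (p := p + 1) (Or.inl hy.ne')).const_mul (B / (p + 1))).sub
    ((hasDerivAt_pow 2 y).const_mul (A / 2))).congr_deriv ?_
  rw [yamabeForce, add_sub_cancel_right]
  field_simp
  rw [Nat.cast_ofNat]
  ring

lemma hasDerivAt_yamabeForce (hy : 0 < y) :
    HasDerivAt (yamabeForce A B p) (B * (p * y ^ (p - 1)) - A) y :=
  (((hasDerivAt_rpow_const (p := p) (Or.inl hy.ne')).const_mul B).sub
    ((hasDerivAt_id y).const_mul A)).congr_deriv (by rw [mul_one])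

lemma isPotentialWell_yamabePotential (hA : 0 < A) (hB : 0 < B) (hp : 1 < p) :
    IsPotentialWell (yamabePotential A B p) (yamabeForce A B p) (Ioi 0) (yamabeConst A B p)
      √((p - 1) * A) where
  isOpen := isOpen_Ioi
  ordConnected := ordConnected_Ioi
  mem := yamabeConst_pos hA hB
  pos := sqrt_pos.2 (mul_pos (by linarith) hA)
  hasDerivAt_potential _ hy := hasDerivAt_yamabePotential (by positivity) hy
  continuousOn _ hy := (hasDerivAt_yamabeForce hy).continuousAt.continuousWithinAt
  hasDerivAt_force := by
    refine (hasDerivAt_yamabeForce (yamabeConst_pos hA hB)).congr_deriv ?_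
    rw [yamabeConst_rpow hA hB hp, sq_sqrt (mul_nonneg (by linarith) hA.le)]
    field_simp
  mul_sub_pos y hy hyc := by
    have hc := yamabeConst_pos (p := p) hA hB
    rw [yamabeForce_eq_mul hA hB hp hy, mul_assoc]
    refine mul_pos (mul_pos hB hy) ?_
    rcases hyc.lt_or_gt with hlt | hlt
    · have := rpow_lt_rpow (le_of_lt hy) hlt (sub_pos.2 hp)
      exact mul_pos_of_neg_of_neg (by linarith) (by linarith)
    · have := rpow_lt_rpow hc.le hlt (sub_pos.2 hp)
      exact mul_pos (by linarith) (by linarith)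

lemma neg_le_yamabePotential (hB : 0 ≤ B) (hp : 0 ≤ p + 1) (hy : 0 < y) :
    -(A / 2 * y ^ 2) ≤ yamabePotential A B p y := by
  rw [yamabePotential, neg_le_sub_iff_le_add, le_add_iff_nonneg_left]
  positivity

lemma yamabePotential_nonpos (hA : 0 < A) (hB : 0 < B) (hp : 1 < p) (hy : 0 < y)
    (hyc : y ≤ yamabeConst A B p) : yamabePotential A B p y ≤ 0 := by
  have hle : y ^ (p - 1) ≤ A / B :=
    (rpow_le_rpow hy.le hyc (by linarith)).trans_eq (yamabeConst_rpow hA hB hp)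
  rw [yamabePotential_eq_mul hy]
  refine mul_nonpos_of_nonneg_of_nonpos (sq_nonneg y) (sub_nonpos.2 ?_)
  calc B / (p + 1) * y ^ (p - 1) ≤ B / (p + 1) * (A / B) := by gcongr
    _ = A / (p + 1) := by field_simp
    _ ≤ A / 2 := by gcongr; linarith

lemma exists_yamabePotential_eq_zero (hA : 0 < A) (hB : 0 < B) (hp : 1 < p) :
    ∃ z, yamabeConst A B p ≤ z ∧ yamabePotential A B p z = 0 := by
  refine ⟨((p + 1) / 2 * (A / B)) ^ (p - 1)⁻¹, ?_, ?_⟩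
  · refine rpow_le_rpow (by positivity) ?_ (by simp [hp.le])
    exact le_mul_of_one_le_left (by positivity) (by linarith)
  · rw [yamabePotential_eq_mul (by positivity), rpow_inv_rpow (by positivity) (by linarith)]
    field_simp
    simp

lemma exists_le_oscillationPeriod_yamabePotential (hA : 0 < A) (hB : 0 < B) (hp : 1 < p)
    (T : ℝ) :
    ∃ b, 0 ≤ b ∧ Icc (-b) b ⊆ wellCoord (yamabePotential A B p) (yamabeConst A B p) '' Ioi 0 ∧
      T ≤ oscillationPeriod (wellInvDeriv (yamabePotential A B p) (yamabeForce A B p) (Ioi 0)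
        (yamabeConst A B p) √((p - 1) * A)) b := by
  have h := isPotentialWell_yamabePotential hA hB hp
  set V := yamabePotential A B p
  set c := yamabeConst A B p
  have hc : 0 < c := h.mem
  have hk : 0 < √A := sqrt_pos.2 hA
  obtain ⟨ε, hε, hεc, hlog_eq⟩ : ∃ ε, 0 < ε ∧ ε ≤ c ∧ log (c / ε) = √A * |T| := by
    refine ⟨c * exp (-(√A * |T|)), by positivity,
      mul_le_of_le_one_right hc.le (exp_le_one_iff.2 (neg_nonpos.2 (by positivity))), ?_⟩
    rw [div_mul_cancel_left₀ hc.ne', exp_neg, inv_inv, log_exp]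
  have hVε : V ε ≤ 0 := yamabePotential_nonpos hA hB hp hε hεc
  obtain ⟨z, hcz, hVz⟩ := exists_yamabePotential_eq_zero hA hB hp
  have himage := h.Icc_wellCoord_subset_image hε (hc.trans_le hcz) hεc hcz (hVε.trans_eq hVz.symm)
  have hlog := h.log_div_le_mul_oscillationPeriod_wellInvDeriv (fun x hx => hx) hk.le hε hεc himage
    fun x hx => by
      have hVx : -(A / 2 * x ^ 2) ≤ V x := neg_le_yamabePotential hB.le (by linarith) hx
      rw [mul_pow, sq_sqrt hA.le]
      linarith
  rw [hlog_eq] at hlog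
  exact ⟨-wellCoord V c ε, neg_nonneg.2 (h.wellCoord_nonpos hε hεc), by rwa [neg_neg],
    (le_abs_self T).trans (le_of_mul_le_mul_left hlog hk)⟩

lemma contDiff_two_of_hasDerivAt {u v s : ℝ → ℝ} (hu : ∀ t, HasDerivAt u (v t) t)
    (hv : ∀ t, HasDerivAt v (s t) t) (hs : Continuous s) : ContDiff ℝ 2 u := by
  have hu' : deriv u = v := funext fun t => (hu t).deriv
  have hv' : deriv v = s := funext fun t => (hv t).deriv
  rw [show (2 : WithTop ℕ∞) = 1 + 1 from rfl, contDiff_succ_iff_deriv, hu', contDiff_one_iff_deriv,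
    hv']
  exact ⟨fun t => (hu t).differentiableAt, by simp, fun t => (hv t).differentiableAt, hs⟩

theorem yamabe_nonconstant_solution_iff_general (hA : 0 < A) (hB : 0 < B) (hp : 1 < p)
    (hT : 0 < T) :
    (∃ u : ℝ → ℝ, ContDiff ℝ 2 u ∧ (∀ t, 0 < u t) ∧ (¬ ∃ a : ℝ, ∀ t, u t = a) ∧
      (∀ t, deriv (deriv u) t - A * u t + B * u t ^ p = 0) ∧ HasMinimalPeriod u T) ↔
    2 * π / √((p - 1) * A) < T := by
  have hω : 0 < √((p - 1) * A) := sqrt_pos.2 (mul_pos (by linarith) hA)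
  constructor
  · rintro ⟨u, hu, hpos, hnc, hode, hper, -⟩
    have hsq := sq_two_pi_div_lt_of_periodic (A := A) (B := B) (p := p) hT (by linarith)
      (fun t => (hu.differentiable two_ne_zero t).hasDerivAt)
      (fun t => (hu.differentiable_deriv_two t).hasDerivAt) hpos
      (fun t => by linarith [hode t]) hper hnc
    rw [div_lt_comm₀ hω hT]
    exact (lt_sqrt (by positivity)).2 hsq
  · intro hlt
    obtain ⟨b, hb, himage, hTb⟩ := exists_le_oscillationPeriod_yamabePotential hA hB hp T
    obtain ⟨u, v, hpos, hu, hv, hper⟩ := (isPotentialWell_yamabePotential hA hB hp)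
      |>.exists_hasMinimalPeriod_of_le_oscillationPeriod hb himage hlt hTb
    have hs : Continuous fun t => -yamabeForce A B p (u t) := continuous_iff_continuousAt.2
      fun t => ((hasDerivAt_yamabeForce (hpos t)).continuousAt.comp (hu t).continuousAt).neg
    refine ⟨u, contDiff_two_of_hasDerivAt hu hv hs, hpos, hper.not_exists_eq_const hT,
      fun t => ?_, hper⟩
    rw [show deriv u = v from funext fun t => (hu t).deriv, (hv t).deriv, yamabeForce]
    ring

end Yamabe

/-- For `n ≥ 3` and `T > 0`, the Yamabe ODE
`u'' - ((n-2)²/4) u + (n(n-2)/4) u^((n+2)/(n-2)) = 0` admits a nonconstant positive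
periodic solution with minimal period `T` if and only if `T > 2π/√(n-2)`. -/
theorem yamabe_nonconstant_solution_iff
    (n : ℕ) (hn : 3 ≤ n) (T : ℝ) (hT : 0 < T) :
    (∃ u : ℝ → ℝ,
      ContDiff ℝ 2 u ∧
      (∀ t, 0 < u t) ∧
      (¬ ∃ a : ℝ, ∀ t, u t = a) ∧
      (∀ t, deriv (deriv u) t - (((n : ℝ) - 2) ^ 2 / 4) * u t
          + ((n : ℝ) * ((n : ℝ) - 2) / 4) * u t ^ (((n : ℝ) + 2) / ((n : ℝ) - 2)) = 0) ∧
      Function.Periodic u T ∧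
      (∀ T' : ℝ, 0 < T' → T' < T → ¬ Function.Periodic u T')) ↔
    2 * π / Real.sqrt ((n : ℝ) - 2) < T := by
  have hn' : (3 : ℝ) ≤ n := by exact_mod_cast hn
  have hn_pos : (0 : ℝ) < n - 2 := by linarith
  have hp : 1 < ((n : ℝ) + 2) / (n - 2) := (one_lt_div hn_pos).2 (by linarith)
  have hω : (((n : ℝ) + 2) / (n - 2) - 1) * ((n - 2) ^ 2 / 4) = n - 2 := by
    field_simp
    ring
  have hB : (0 : ℝ) < n * (n - 2) / 4 := by positivity
  have hiff := yamabe_nonconstant_solution_iff_general (A := ((n : ℝ) - 2) ^ 2 / 4)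
    (by positivity) hB hp hT
  rwa [hω] at hiff
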